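/- arXiv:math/0509081 — 2 statements merged into one kernel-verified Lean document; each statement's English description precedes it below -/
import Mathlib

section
/- Let k ≥ 2 be an integer, let a < b be reals, and let a = y_0 < y_1 < ⋯ < y_{2k−4} < y_{2k−3} = b be given points. For every continuously differentiable function f : ℝ → ℝ there exists exactly one function H : [a,b] → ℝ such that (i) H is (2k−2)-times continuously differentiable on [a,b], (ii) for each i ∈ {0,…,2k−4}, H agrees on [y_i, y_{i+1}] with a polynomial of degree at most 2k−1, and (iii) H(y_i) = f(y_i) and H′(y_i) = f′(y_i) for all i = 0,…,2k−3. -/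
open Set

/-- `IsHermiteSplineInterp k τ f H` says that `H` is a Hermite spline interpolant of `f`
of degree `2k-1` with knots `τ 0 < τ 1 < ⋯ < τ (2k-3)` (so interior knots
`τ 1, …, τ (2k-4)`): `H` is `(2k-2)`-times continuously differentiable on
`[τ 0, τ (2k-3)]`, agrees on each knot interval with a polynomial of degree at most
`2k-1`, and matches the values and first derivatives of `f` at all the knots. -/
def IsHermiteSplineInterp (k : ℕ) (τ : ℕ → ℝ) (f H : ℝ → ℝ) : Prop :=
  ContDiffOn ℝ (2*k-2 : ℕ) H (Icc (τ 0) (τ (2*k-3))) ∧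
  (∀ i, i < 2*k-3 → ∃ p : Polynomial ℝ, p.natDegree ≤ 2*k-1 ∧
    ∀ x ∈ Icc (τ i) (τ (i+1)), H x = p.eval x) ∧
  (∀ i, i < 2*k-2 →
    H (τ i) = f (τ i) ∧
    derivWithin H (Icc (τ 0) (τ (2*k-3))) (τ i)
      = derivWithin f (Icc (τ 0) (τ (2*k-3))) (τ i))


/-- `g` has `n` points of strictly alternating sign in `[l, r)`. -/
def AltSign (g : ℝ → ℝ) (n : ℕ) (l r : ℝ) : Prop :=
  ∃ (x : ℕ → ℝ) (s : ℝ), (s = 1 ∨ s = -1) ∧ (∀ i, i + 1 < n → x i < x (i+1)) ∧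
    (∀ i, i < n → x i ∈ Ico l r) ∧ (∀ i, i < n → 0 < s * (-1)^i * g (x i))

lemma exists_right_deriv_pos (g g' : ℝ → ℝ) (u v : ℝ) (huv : u < v)
    (hc : ContinuousOn g (Icc u v)) (hd : ∀ x ∈ Ico u v, HasDerivWithinAt g (g' x) (Ici x) x)
    (s : ℝ) (h : 0 < s * (g v - g u)) : ∃ x ∈ Ico u v, 0 < s * g' x := by
  by_contra! hcon
  have := image_le_of_deriv_right_le_deriv_boundary (f := fun x => s * g x)
    (f' := fun x => s * g' x) (a := u) (b := v) (B := fun _ => s * g u) (B' := fun _ => 0)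
    (continuousOn_const.mul hc) (fun x hx => (hd x hx).const_mul s) le_rfl
    continuousOn_const (fun x _ => hasDerivWithinAt_const _ _ _) (fun x hx => hcon x hx)
    (right_mem_Icc.2 huv.le)
  linarith [mul_sub s (g v) (g u)]

lemma alt_of_diff (g g' : ℝ → ℝ) (l r : ℝ) (n : ℕ)
    (hc : ContinuousOn g (Icc l r)) (hd : ∀ x ∈ Ico l r, HasDerivWithinAt g (g' x) (Ici x) x)
    (x : ℕ → ℝ) (s : ℝ) (hs : s = 1 ∨ s = -1) (hx : ∀ i, i < n → x i < x (i+1))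
    (hm : ∀ i, i ≤ n → x i ∈ Icc l r)
    (h : ∀ i, i < n → 0 < s * (-1)^i * (g (x (i+1)) - g (x i))) : AltSign g' n l r := by
  have key : ∀ i, ∃ ξ, i < n → ξ ∈ Ico (x i) (x (i+1)) ∧ 0 < s * (-1)^i * g' ξ := by
    intro i
    by_cases hi : i < n
    · obtain ⟨ξ, h1, h2⟩ := exists_right_deriv_pos g g' (x i) (x (i+1)) (hx i hi)
        (hc.mono (Icc_subset_Icc (hm i hi.le).1 (hm (i+1) hi).2))
        (fun z hz => hd z ⟨(hm i hi.le).1.trans hz.1, hz.2.trans_le (hm (i+1) hi).2⟩)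
        (s * (-1)^i) (h i hi)
      exact ⟨ξ, fun _ => ⟨h1, h2⟩⟩
    · exact ⟨0, fun h => absurd h hi⟩
  choose ξ hξ using key
  refine ⟨ξ, s, hs, ?_, ?_, fun i hi => (hξ i hi).2⟩
  · intro i hi
    exact (hξ i (by omega)).1.2.trans_le (hξ (i+1) hi).1.1
  · intro i hi
    exact ⟨(hm i hi.le).1.trans (hξ i hi).1.1, (hξ i hi).1.2.trans_le (hm (i+1) hi).2⟩

lemma alt_deriv (g g' : ℝ → ℝ) (l r : ℝ) (n : ℕ)
    (hc : ContinuousOn g (Icc l r)) (hd : ∀ x ∈ Ico l r, HasDerivWithinAt g (g' x) (Ici x) x)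
    (h : AltSign g (n+1) l r) : AltSign g' n l r := by
  obtain ⟨x, s, hs, hx, hm, hg⟩ := h
  refine alt_of_diff g g' l r n hc hd x (-s) (by rcases hs with rfl | rfl <;> simp)
    (fun i hi => hx i (by omega)) (fun i hi => Ico_subset_Icc_self (hm i (by omega))) ?_
  intro i hi
  have h1 := hg i (by omega)
  have h2 := hg (i+1) (by omega)
  rw [pow_succ] at h2
  linarith

lemma alt_piece (g g1 g2 : ℝ → ℝ) (l r : ℝ)
    (hc : ContinuousOn g (Icc l r)) (hd : ∀ x ∈ Ico l r, HasDerivWithinAt g (g1 x) (Ici x) x)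
    (hc1 : ContinuousOn g1 (Icc l r)) (hd1 : ∀ x ∈ Ico l r, HasDerivWithinAt g1 (g2 x) (Ici x) x)
    (hl : g l = 0) (hr : g r = 0) (hl1 : g1 l = 0) (hr1 : g1 r = 0)
    (hz : ∃ z ∈ Icc l r, g z ≠ 0) : AltSign g2 3 l r := by
  obtain ⟨z, hz, hgz⟩ := hz
  have hlz : l < z := lt_of_le_of_ne hz.1 (by rintro rfl; exact hgz hl)
  have hzr : z < r := lt_of_le_of_ne hz.2 (by rintro rfl; exact hgz hr)
  obtain ⟨s, hs, hsz⟩ : ∃ s : ℝ, (s = 1 ∨ s = -1) ∧ 0 < s * g z := by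
    rcases lt_or_gt_of_ne hgz with h | h
    · exact ⟨-1, Or.inr rfl, by linarith⟩
    · exact ⟨1, Or.inl rfl, by linarith⟩
  have h1 : AltSign g1 2 l r := by
    refine alt_of_diff g g1 l r 2 hc hd (fun i => if i = 0 then l else if i = 1 then z else r) s hs
      ?_ ?_ ?_
    · intro i hi; interval_cases i <;> simp [hlz, hzr]
    · intro i hi; interval_cases i <;> simp [hlz.le, hzr.le, hlz.le.trans hzr.le]
    · intro i hi; interval_cases i <;> simp [hl, hr] <;> linarith
  obtain ⟨x, t, ht, hx, hm, hg⟩ := h1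
  have a0 := hg 0 (by omega)
  have a1 := hg 1 (by omega)
  have m0 := hm 0 (by omega)
  have m1 := hm 1 (by omega)
  have m01 := hx 0 (by omega)
  have hl0 : l < x 0 := lt_of_le_of_ne m0.1 (by intro h; rw [← h, hl1] at a0; simp at a0)
  simp only [zero_add, pow_zero, pow_one] at *
  refine alt_of_diff g1 g2 l r 3 hc1 hd1
    (fun i => if i = 0 then l else if i = 1 then x 0 else if i = 2 then x 1 else r) t ht
      ?_ ?_ ?_
  · intro i hi; interval_cases i <;> simp [hl0, m01, m1.2]
  · intro i hi; interval_cases i <;> simp [m0.1, m0.2.le, m1.1, m1.2.le, hlz.le.trans hzr.le]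
  · intro i hi; interval_cases i <;> simp [hl1, hr1] <;> linarith

lemma alt_merge (g : ℝ → ℝ) (l c r : ℝ) (n : ℕ) (hlc : l ≤ c) (hcr : c ≤ r)
    (h1 : AltSign g (n+1) l c) (h2 : AltSign g 3 c r) : AltSign g (n+3) l r := by
  obtain ⟨x, s, hs, hx, hm, hg⟩ := h1
  obtain ⟨u, t, ht, hu, hmu, hgu⟩ := h2
  have hcases : t = s * (-1)^(n+1) ∨ t = s * (-1)^n := by
    rcases neg_one_pow_eq_or ℝ n with h | h <;> rw [pow_succ, h] <;>
    rcases hs with rfl | rfl <;> rcases ht with rfl | rfl <;> norm_num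
  have u0 := hmu 0 (by omega)
  have u1 := hmu 1 (by omega)
  have u2 := hmu 2 (by omega)
  have b0 := hgu 0 (by omega)
  have b1 := hgu 1 (by omega)
  have b2 := hgu 2 (by omega)
  have u01 := hu 0 (by omega)
  have u12 := hu 1 (by omega)
  simp only [zero_add, Nat.reduceAdd] at u01 u12
  have aux : ∀ v w : ℝ, v ∈ Ico c r → w ∈ Ico c r → v < w → 0 < s * (-1)^(n+1) * g v →
      0 < s * (-1)^(n+2) * g w → AltSign g (n+3) l r := by
    intro v w hv hw hvw gv gw
    refine ⟨fun i => if i ≤ n then x i else if i = n+1 then v else w, s, hs, ?_, ?_, ?_⟩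
    · intro i hi
      rcases (by omega : i + 1 ≤ n ∨ i = n ∨ i = n + 1) with h | h | h
      · simp [h, (by omega : i ≤ n)]; exact hx i (by omega)
      · subst h; simp; exact (hm i (by omega)).2.trans_le hv.1
      · subst h; simp [hvw]
    · intro i hi
      rcases (by omega : i ≤ n ∨ i = n + 1 ∨ i = n + 2) with h | h | h
      · simp only [h, if_true]; exact ⟨(hm i (by omega)).1, (hm i (by omega)).2.trans_le hcr⟩
      · subst h; simp; exact ⟨hlc.trans hv.1, hv.2⟩
      · subst h; simp; exact ⟨hlc.trans hw.1, hw.2⟩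
    · intro i hi
      rcases (by omega : i ≤ n ∨ i = n + 1 ∨ i = n + 2) with h | h | h
      · simp only [h, if_true]; exact hg i (by omega)
      · subst h; simpa using gv
      · subst h; simpa using gw
  rcases hcases with h | h
  · refine aux (u 0) (u 1) u0 u1 u01 ?_ ?_
    · rw [← h]; simpa using b0
    · rw [h] at b1; convert b1 using 2; ring
  · refine aux (u 1) (u 2) u1 u2 u12 ?_ ?_
    · rw [h] at b1; convert b1 using 2; ring
    · rw [h] at b2; convert b2 using 2; ring

lemma alt_step (d : ℝ → ℝ) (z : ℕ → ℝ) (m n : ℕ)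
    (hd : ∀ i, i < m → ∃ c, ∀ x ∈ Ico (z i) (z (i+1)), d x = c)
    (h : AltSign d n (z 0) (z m)) : n ≤ m := by
  obtain ⟨x, s, hs, hx, hm, hg⟩ := h
  have key : ∀ i, i < n → i ≤ m → z i ≤ x i := by
    intro i
    induction i with
    | zero => intro hi _; exact (hm 0 hi).1
    | succ i ih =>
      intro hi him
      by_contra! hlt
      have h1 := ih (by omega) (by omega)
      have h2 := hx i hi
      obtain ⟨c, hc⟩ := hd i (by omega)
      have g1 := hg i (by omega)
      have g2 := hg (i+1) hi
      rw [hc _ ⟨h1, h2.trans hlt⟩] at g1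
      rw [hc _ ⟨h1.trans h2.le, hlt⟩, pow_succ] at g2
      linarith
  by_contra! hlt
  exact absurd (key m hlt le_rfl) (not_le.2 (hm m hlt).2)

lemma knots_mono (z : ℕ → ℝ) (m : ℕ) (hz : ∀ i, i < m → z i < z (i+1)) :
    ∀ i j, i ≤ j → j ≤ m → z i ≤ z j := by
  intro i j hij
  induction j, hij using Nat.le_induction with
  | base => intro _; exact le_rfl
  | succ j hij ih => intro hj; exact (ih (by omega)).trans (hz j (by omega)).le

lemma knots_cover (z : ℕ → ℝ) (m : ℕ) (x : ℝ) (h0 : z 0 ≤ x) (h : x < z m) :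
    ∃ i, i < m ∧ x ∈ Ico (z i) (z (i+1)) := by
  induction m with
  | zero => exact absurd h (not_lt.2 h0)
  | succ m ih =>
    by_cases hx : x < z m
    · obtain ⟨i, hi, hxi⟩ := ih hx
      exact ⟨i, by omega, hxi⟩
    · exact ⟨m, by omega, not_lt.1 hx, h⟩

lemma spline_piece (N : ℕ) (a b u v : ℝ) (huv : u < v) (hau : a ≤ u) (hvb : v ≤ b)
    (H : ℝ → ℝ) (hC : ContDiffOn ℝ (N : ℕ) H (Icc a b)) (p : Polynomial ℝ)
    (hp : ∀ x ∈ Icc u v, H x = p.eval x) :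
    ∀ j, j ≤ N → ∀ x ∈ Icc u v,
      iteratedDerivWithin j H (Icc a b) x = (Polynomial.derivative^[j] p).eval x := by
  have hab : a < b := by linarith
  have hU : UniqueDiffOn ℝ (Icc a b) := uniqueDiffOn_Icc hab
  have hsub : Icc u v ⊆ Icc a b := Icc_subset_Icc hau hvb
  intro j
  induction j with
  | zero => intro _ x hx; simpa using hp x hx
  | succ j ih =>
    intro hj
    have ih := ih (by omega)
    have hint : EqOn (iteratedDerivWithin (j+1) H (Icc a b))
        (fun x => (Polynomial.derivative^[j+1] p).eval x) (Ioo u v) := by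
      intro x hx
      have hxI : Icc a b ∈ nhds x := Icc_mem_nhds (hau.trans_lt hx.1) (hx.2.trans_le hvb)
      have heq : iteratedDerivWithin j H (Icc a b) =ᶠ[nhds x]
          fun x => (Polynomial.derivative^[j] p).eval x := by
        filter_upwards [Ioo_mem_nhds hx.1 hx.2] with z hz
        exact ih z (Ioo_subset_Icc_self hz)
      rw [iteratedDerivWithin_succ, derivWithin_of_mem_nhds hxI, heq.deriv_eq, Polynomial.deriv,
        Function.iterate_succ_apply']
    have hcont : ContinuousOn (iteratedDerivWithin (j+1) H (Icc a b)) (Icc u v) :=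
      (hC.continuousOn_iteratedDerivWithin (by exact_mod_cast hj) hU).mono hsub
    refine hint.of_subset_closure hcont (Polynomial.continuous _).continuousOn
      Ioo_subset_Icc_self ?_
    rw [closure_Ioo huv.ne]

lemma flat_poly (N : ℕ) (p : Polynomial ℝ) (hdeg : p.natDegree ≤ N + 1) (u v : ℝ) (huv : u ≠ v)
    (hu : ∀ j, j ≤ N → (Polynomial.derivative^[j] p).eval u = 0) (hv : p.eval v = 0) : p = 0 := by
  by_contra h
  have h1 : N < p.rootMultiplicity u :=
    (Polynomial.lt_rootMultiplicity_iff_isRoot_iterate_derivative h).2 hu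
  have hdvd1 : (Polynomial.X - Polynomial.C u)^(N+1) ∣ p :=
    (Polynomial.le_rootMultiplicity_iff h).1 h1
  have hdvd2 : (Polynomial.X - Polynomial.C v) ∣ p := Polynomial.dvd_iff_isRoot.2 hv
  have hcop : IsCoprime ((Polynomial.X - Polynomial.C u)^(N+1)) (Polynomial.X - Polynomial.C v) :=
    (Polynomial.isCoprime_X_sub_C_of_isUnit_sub (sub_ne_zero.2 huv).isUnit).pow_left
  have := Polynomial.natDegree_le_of_dvd (hcop.mul_dvd hdvd1 hdvd2) h
  rw [Polynomial.natDegree_mul (pow_ne_zero _ (Polynomial.X_sub_C_ne_zero _))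
    (Polynomial.X_sub_C_ne_zero _), Polynomial.natDegree_pow] at this
  simp at this
  omega

lemma spline_unique (K : ℕ) (y : ℕ → ℝ) (hmono : ∀ i, i < 2*K+1 → y i < y (i+1)) (H : ℝ → ℝ)
    (hC : ContDiffOn ℝ (2*K+2 : ℕ) H (Icc (y 0) (y (2*K+1))))
    (hp : ∀ i, i < 2*K+1 → ∃ p : Polynomial ℝ, p.natDegree ≤ 2*K+3 ∧
      ∀ x ∈ Icc (y i) (y (i+1)), H x = p.eval x)
    (h0 : ∀ i, i < 2*K+2 → H (y i) = 0)
    (h1 : ∀ i, i < 2*K+2 → derivWithin H (Icc (y 0) (y (2*K+1))) (y i) = 0) :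
    ∀ x ∈ Icc (y 0) (y (2*K+1)), H x = 0 := by
  have hle := knots_mono y _ hmono
  have hab : y 0 < y (2*K+1) :=
    (hmono 0 (by omega)).trans_le (hle 1 _ (by omega) le_rfl)
  set a := y 0 with ha
  set b := y (2*K+1) with hb
  have hU : UniqueDiffOn ℝ (Icc a b) := uniqueDiffOn_Icc hab
  set G : ℕ → ℝ → ℝ := fun j => iteratedDerivWithin j H (Icc a b) with hG
  have hGc : ∀ j, j ≤ 2*K+2 → ContinuousOn (G j) (Icc a b) := fun j hj =>
    hC.continuousOn_iteratedDerivWithin (by exact_mod_cast hj) hU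
  have hGd : ∀ j, j < 2*K+2 → ∀ x ∈ Ico a b, HasDerivWithinAt (G j) (G (j+1) x) (Ici x) x := by
    intro j hj x hx
    have hdiff := hC.differentiableOn_iteratedDerivWithin (m := j) (by exact_mod_cast hj) hU x
      (Ico_subset_Icc_self hx)
    have := hdiff.hasDerivWithinAt
    rw [← iteratedDerivWithin_succ] at this
    exact this.mono_of_mem_nhdsWithin
      (Filter.mem_of_superset (Icc_mem_nhdsGE hx.2) (Icc_subset_Icc_left hx.1))
  choose! p hpd hpe using hp
  have hpiece : ∀ i, i < 2*K+1 → ∀ j, j ≤ 2*K+2 → ∀ x ∈ Icc (y i) (y (i+1)),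
      G j x = (Polynomial.derivative^[j] (p i)).eval x := fun i hi =>
    spline_piece (2*K+2) a b (y i) (y (i+1)) (hmono i hi) (hle 0 i (by omega) (by omega))
      (hle (i+1) _ (by omega) le_rfl) H hC (p i) (hpe i hi)
  -- a piece is zero iff the next one is
  have hzero_poly : ∀ i, i < 2*K+1 → (∀ x ∈ Icc (y i) (y (i+1)), H x = 0) → p i = 0 := by
    intro i hi hx
    refine Polynomial.eq_zero_of_infinite_isRoot _ ((Icc_infinite (hmono i hi)).mono ?_)
    intro x hxx
    show (p i).eval x = 0
    rw [← hpe i hi x hxx, hx x hxx]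
  have hnext : ∀ i, i + 1 < 2*K+1 → (p i = 0 ↔ p (i+1) = 0) := by
    intro i hi
    have hL := fun j hj => hpiece i (by omega) j hj (y (i+1)) (right_mem_Icc.2 (hmono i (by omega)).le)
    have hR := fun j hj => hpiece (i+1) hi j hj (y (i+1)) (left_mem_Icc.2 (hmono (i+1) hi).le)
    constructor
    · intro h
      refine flat_poly (2*K+2) _ (hpd (i+1) hi) (y (i+1)) (y (i+2)) (hmono (i+1) hi).ne ?_ ?_
      · intro j hj
        rw [← hR j hj, hL j hj, h]; simp
      · rw [← hpe (i+1) hi _ (right_mem_Icc.2 (hmono (i+1) hi).le)]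
        exact h0 _ (by omega)
    · intro h
      refine flat_poly (2*K+2) _ (hpd i (by omega)) (y (i+1)) (y i) (hmono i (by omega)).ne' ?_ ?_
      · intro j hj
        rw [← hL j hj, hR j hj, h]; simp
      · rw [← hpe i (by omega) _ (left_mem_Icc.2 (hmono i (by omega)).le)]
        exact h0 _ (by omega)
  have hall : ∀ i, i < 2*K+1 → (p 0 = 0 ↔ p i = 0) := by
    intro i
    induction i with
    | zero => intro _; exact Iff.rfl
    | succ i ih => intro hi; exact (ih (by omega)).trans (hnext i hi)
  by_cases hp0 : p 0 = 0
  · have hIco : ∀ x ∈ Ico a b, H x = 0 := by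
      intro x hx
      obtain ⟨i, hi, hxi⟩ := knots_cover y (2*K+1) x hx.1 hx.2
      rw [hpe i hi x (Ico_subset_Icc_self hxi), (hall i hi).1 hp0]; simp
    intro x hx
    rcases hx.2.eq_or_lt with h | h
    · rw [h]; exact h0 _ (by omega)
    · exact hIco x ⟨hx.1, h⟩
  exfalso
  have hG2 : ∀ i, i < 2*K+1 → AltSign (G 2) 3 (y i) (y (i+1)) := by
    intro i hi
    have e1 : a ≤ y i := hle 0 i (by omega) (by omega)
    have e2 : y (i+1) ≤ b := hle (i+1) _ (by omega) le_rfl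
    have s1 : Icc (y i) (y (i+1)) ⊆ Icc a b := Icc_subset_Icc e1 e2
    have s2 : Ico (y i) (y (i+1)) ⊆ Ico a b := Ico_subset_Ico e1 e2
    refine alt_piece (G 0) (G 1) (G 2) _ _ ((hGc 0 (by omega)).mono s1)
      (fun x hx => hGd 0 (by omega) x (s2 hx)) ((hGc 1 (by omega)).mono s1)
      (fun x hx => hGd 1 (by omega) x (s2 hx)) ?_ ?_ ?_ ?_ ?_
    · simpa [hG] using h0 i (by omega)
    · simpa [hG] using h0 (i+1) (by omega)
    · simpa [hG, iteratedDerivWithin_one] using h1 i (by omega)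
    · simpa [hG, iteratedDerivWithin_one] using h1 (i+1) (by omega)
    · by_contra! hcon
      exact hp0 ((hall i hi).2 (hzero_poly i hi (by simpa [hG] using hcon)))
  have hbase : ∀ m, m < 2*K+1 → AltSign (G 2) (2*m+3) a (y (m+1)) := by
    intro m
    induction m with
    | zero => intro h; exact hG2 0 h
    | succ m ih =>
      intro hm
      exact alt_merge (G 2) a (y (m+1)) (y (m+2)) (2*m+2) (hle 0 _ (by omega) (by omega))
        (hle _ _ (by omega) (by omega)) (ih (by omega)) (hG2 (m+1) hm)
  have hdesc : ∀ j, j ≤ 2*K → AltSign (G (j+2)) (2*(2*K)+3-j) a b := by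
    intro j
    induction j with
    | zero => intro _; exact hbase (2*K) (by omega)
    | succ j ih =>
      intro hj
      have := ih (by omega)
      rw [(by omega : 2*(2*K)+3-j = (2*(2*K)+3-(j+1)) + 1)] at this
      exact alt_deriv (G (j+2)) (G (j+3)) a b _ (hGc _ (by omega)) (hGd _ (by omega)) this
  have hlast := hdesc (2*K) le_rfl
  rw [(by omega : 2*(2*K)+3-2*K = (2*K+2)+1)] at hlast
  set d : ℝ → ℝ := fun x => derivWithin (G (2*K+2)) (Ici x) x with hd
  have hdp : ∀ i, i < 2*K+1 → ∀ x ∈ Ico (y i) (y (i+1)), HasDerivWithinAt (G (2*K+2))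
      ((Polynomial.derivative^[2*K+3] (p i)).eval x) (Ici x) x := by
    intro i hi x hx
    rw [Function.iterate_succ_apply']
    refine ((Polynomial.derivative^[2*K+2] (p i)).hasDerivAt x).hasDerivWithinAt.congr_of_eventuallyEq
      ?_ (hpiece i hi _ le_rfl x (Ico_subset_Icc_self hx))
    filter_upwards [Icc_mem_nhdsGE hx.2] with z hz
    exact hpiece i hi _ le_rfl z ⟨hx.1.trans hz.1, hz.2⟩
  have hdd : ∀ i, i < 2*K+1 → ∀ x ∈ Ico (y i) (y (i+1)),
      d x = (Polynomial.derivative^[2*K+3] (p i)).eval x := fun i hi x hx =>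
    (hdp i hi x hx).derivWithin (uniqueDiffOn_Ici x x self_mem_Ici)
  have hfin : AltSign d (2*K+2) a b := by
    refine alt_deriv (G (2*K+2)) d a b _ (hGc _ le_rfl) ?_ hlast
    intro x hx
    obtain ⟨i, hi, hxi⟩ := knots_cover y (2*K+1) x hx.1 hx.2
    rw [hdd i hi x hxi]
    exact hdp i hi x hxi
  have := alt_step d y (2*K+1) (2*K+2) ?_ hfin
  · omega
  · intro i hi
    have hdeg : (Polynomial.derivative^[2*K+3] (p i)).natDegree = 0 := by
      have := Polynomial.natDegree_iterate_derivative (p i) (2*K+3)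
      have := hpd i hi
      omega
    refine ⟨(Polynomial.derivative^[2*K+3] (p i)).coeff 0, fun x hx => ?_⟩
    rw [hdd i hi x hx, Polynomial.eq_C_of_natDegree_eq_zero hdeg]
    simp

lemma hasDerivAt_truncPow (c : ℝ) (n : ℕ) (x : ℝ) :
    HasDerivAt (fun x : ℝ => (max (x - c) 0)^(n+2)) ((n+2) * (max (x - c) 0)^(n+1)) x := by
  rcases lt_trichotomy x c with h | h | h
  · have e : (fun x : ℝ => (max (x - c) 0)^(n+2)) =ᶠ[nhds x] fun _ => 0 := by
      filter_upwards [Iio_mem_nhds h] with z hz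
      rw [max_eq_right (by linarith [mem_Iio.1 hz])]; simp
    rw [max_eq_right (by linarith)]
    simpa using (hasDerivAt_const x (0:ℝ)).congr_of_eventuallyEq e
  · subst h
    have h0 : ((n:ℝ)+2) * (max (x - x) 0)^(n+1) = 0 := by simp
    rw [h0, hasDerivAt_iff_isLittleO]
    have h2 : (fun z : ℝ => (z - x)^(n+2)) =o[nhds x] fun z => z - x := by
      have := Asymptotics.isLittleO_pow_sub_sub x (m := n+2) (by omega)
      refine Asymptotics.IsLittleO.of_norm_left (this.congr_left fun z => ?_)
      rw [norm_pow]
    refine Asymptotics.IsBigO.trans_isLittleO ?_ h2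
    refine Asymptotics.IsBigO.of_bound 1 (Filter.Eventually.of_forall fun z => ?_)
    simp only [sub_self, max_self, smul_zero, sub_zero, ne_eq, Nat.add_eq_zero_iff,
      OfNat.ofNat_ne_zero, and_false, not_false_eq_true, zero_pow, norm_pow, one_mul]
    gcongr
    rw [Real.norm_eq_abs, Real.norm_eq_abs, abs_of_nonneg (le_max_right _ _)]
    exact max_le (le_abs_self _) (abs_nonneg _)
  · have e : (fun x : ℝ => (max (x - c) 0)^(n+2)) =ᶠ[nhds x] fun x => (x - c)^(n+2) := by
      filter_upwards [Ioi_mem_nhds h] with z hz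
      rw [max_eq_left (by linarith [mem_Ioi.1 hz])]
    rw [max_eq_left (by linarith)]
    refine HasDerivAt.congr_of_eventuallyEq ?_ e
    have := ((hasDerivAt_id x).sub_const c).fun_pow (n+2)
    simpa using this

lemma contDiff_truncPow (c : ℝ) (n : ℕ) :
    ContDiff ℝ (n : ℕ) (fun x : ℝ => (max (x - c) 0)^(n+1)) := by
  induction n with
  | zero =>
    simp only [Nat.cast_zero, contDiff_zero]
    fun_prop
  | succ n ih =>
    rw [Nat.cast_add, Nat.cast_one, contDiff_succ_iff_deriv]
    refine ⟨fun x => (hasDerivAt_truncPow c n x).differentiableAt, by simp, ?_⟩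
    have : deriv (fun x : ℝ => (max (x - c) 0)^(n+1+1)) =
        fun x => ((n:ℝ)+2) * (max (x - c) 0)^(n+1) :=
      funext fun x => (hasDerivAt_truncPow c n x).deriv
    rw [this]
    exact contDiff_const.mul ih

/-- Splines in the truncated power basis. -/
noncomputable def splineMap (K : ℕ) (y : ℕ → ℝ) :
    ((Fin (2*K+4) → ℝ) × (Fin (2*K) → ℝ)) →ₗ[ℝ] (ℝ → ℝ) where
  toFun c := fun x => ∑ i, c.1 i * x^(i:ℕ) + ∑ j, c.2 j * (max (x - y (j+1)) 0)^(2*K+3)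
  map_add' c e := by
    funext x
    simp only [Prod.fst_add, Prod.snd_add, Pi.add_apply, add_mul, Finset.sum_add_distrib]
    ring
  map_smul' r c := by
    funext x
    simp only [Prod.smul_fst, Prod.smul_snd, Pi.smul_apply, smul_eq_mul, RingHom.id_apply,
      mul_add, Finset.mul_sum, mul_assoc]

lemma splineMap_contDiff (K : ℕ) (y : ℕ → ℝ) (c) :
    ContDiff ℝ (2*K+2 : ℕ) (splineMap K y c) := by
  refine ContDiff.add ?_ ?_
  · exact ContDiff.sum fun i _ => contDiff_const.mul (contDiff_id.pow _)
  · exact ContDiff.sum fun i _ => contDiff_const.mul (contDiff_truncPow _ (2*K+2))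

lemma splineMap_differentiable (K : ℕ) (y : ℕ → ℝ) (c) :
    Differentiable ℝ (splineMap K y c) :=
  (splineMap_contDiff K y c).differentiable (by simp)

lemma splineMap_piece (K : ℕ) (y : ℕ → ℝ) (hmono : ∀ i, i < 2*K+1 → y i < y (i+1)) (c)
    (i : ℕ) (hi : i < 2*K+1) : ∃ p : Polynomial ℝ, p.natDegree ≤ 2*K+3 ∧
      ∀ x ∈ Icc (y i) (y (i+1)), splineMap K y c x = p.eval x := by
  have hle := knots_mono y _ hmono
  refine ⟨∑ i, Polynomial.C (c.1 i) * Polynomial.X^(i:ℕ) + ∑ j : Fin (2*K),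
    if (j:ℕ) + 1 ≤ i then Polynomial.C (c.2 j) *
      (Polynomial.X - Polynomial.C (y (j+1)))^(2*K+3) else 0, ?_, ?_⟩
  · refine Polynomial.natDegree_add_le_of_degree_le ?_ ?_
    · refine Polynomial.natDegree_sum_le_of_forall_le _ _ fun i _ => ?_
      refine (Polynomial.natDegree_C_mul_X_pow_le _ _).trans (by omega)
    · refine Polynomial.natDegree_sum_le_of_forall_le _ _ fun j _ => ?_
      split_ifs
      · refine (Polynomial.natDegree_C_mul_le _ _).trans ?_
        rw [Polynomial.natDegree_pow]; simp
      · simp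
  · intro x hx
    simp only [splineMap, LinearMap.coe_mk, AddHom.coe_mk, Polynomial.eval_add,
      Polynomial.eval_finset_sum, Polynomial.eval_mul, Polynomial.eval_C, Polynomial.eval_pow,
      Polynomial.eval_X]
    congr 1
    refine Finset.sum_congr rfl fun j _ => ?_
    split_ifs with h
    · rw [max_eq_left (by linarith [hle (j+1) i h (by omega), hx.1])]; simp
    · rw [max_eq_right (by linarith [hle (i+1) (j+1) (by omega) (by omega), hx.2])]; simp

lemma splineMap_inj (K : ℕ) (y : ℕ → ℝ) (hmono : ∀ i, i < 2*K+1 → y i < y (i+1)) (c)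
    (h : ∀ x ∈ Icc (y 0) (y (2*K+1)), splineMap K y c x = 0) : c = 0 := by
  have hle := knots_mono y _ hmono
  have h1 : c.1 = 0 := by
    have hz : (∑ i, Polynomial.C (c.1 i) * Polynomial.X^(i:ℕ) : Polynomial ℝ) = 0 := by
      refine Polynomial.eq_zero_of_infinite_isRoot _
        ((Icc_infinite (hmono 0 (by omega))).mono ?_)
      intro x hx
      have hx' := h x ⟨hx.1, hx.2.trans (hle 1 _ (by omega) le_rfl)⟩
      simp only [splineMap, LinearMap.coe_mk, AddHom.coe_mk] at hx'
      rw [Finset.sum_eq_zero (s := (Finset.univ : Finset (Fin (2*K))))] at hx'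
      · simp only [mem_setOf_eq, Polynomial.IsRoot.def, Polynomial.eval_finset_sum,
          Polynomial.eval_mul, Polynomial.eval_C, Polynomial.eval_pow, Polynomial.eval_X]
        linarith
      · intro j _
        rw [max_eq_right (by linarith [hle 1 (j+1) (by omega) (by omega), hx.2])]; simp
    funext i
    have := congrArg (fun q => q.coeff (i:ℕ)) hz
    simpa [Polynomial.finset_sum_coeff, Polynomial.coeff_X_pow, Fin.val_inj] using this
  have h2 : ∀ n, ∀ hn : n < 2*K, c.2 ⟨n, hn⟩ = 0 := by
    intro n
    induction n using Nat.strong_induction_on with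
    | _ n ih =>
      intro hn
      have hlt := hmono (n+1) (by omega)
      have hx' := h (y (n+2)) ⟨hle 0 _ (by omega) (by omega), hle _ _ (by omega) le_rfl⟩
      simp only [splineMap, LinearMap.coe_mk, AddHom.coe_mk, h1] at hx'
      rw [Finset.sum_eq_single_of_mem (s := (Finset.univ : Finset (Fin (2*K)))) ⟨n, hn⟩
        (Finset.mem_univ _)] at hx'
      · simp only [Pi.zero_apply, zero_mul, Finset.sum_const_zero, zero_add, mul_eq_zero] at hx'
        rcases hx' with hx' | hx'
        · exact hx'
        · rw [max_eq_left (by linarith)] at hx'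
          have := pow_eq_zero_iff (by omega) |>.1 hx'
          linarith
      · intro j _ hj
        have hj' : (j:ℕ) ≠ n := fun e => hj (Fin.ext e)
        rcases lt_or_gt_of_ne hj' with e | e
        · rw [ih j e j.2]; simp
        · rw [max_eq_right (by linarith [hle (n+2) (j+1) (by omega) (by omega)])]; simp
  exact Prod.ext h1 (funext fun j => h2 j j.2)

/-- The Hermite data of a spline. -/
noncomputable def hermiteMap (K : ℕ) (y : ℕ → ℝ) :
    ((Fin (2*K+4) → ℝ) × (Fin (2*K) → ℝ)) →ₗ[ℝ]
      ((Fin (2*K+2) → ℝ) × (Fin (2*K+2) → ℝ)) where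
  toFun c := (fun i => splineMap K y c (y i), fun i => deriv (splineMap K y c) (y i))
  map_add' c e := by
    refine Prod.ext (funext fun i => by simp) (funext fun i => ?_)
    simp only [map_add, Prod.snd_add, Pi.add_apply]
    exact deriv_add (splineMap_differentiable K y c _) (splineMap_differentiable K y e _)
  map_smul' r c := by
    refine Prod.ext (funext fun i => by simp) (funext fun i => ?_)
    simp only [map_smul, Prod.smul_snd, Pi.smul_apply, RingHom.id_apply]
    exact deriv_const_smul r (splineMap_differentiable K y c _)

lemma hermiteMap_surj (K : ℕ) (y : ℕ → ℝ) (hmono : ∀ i, i < 2*K+1 → y i < y (i+1)) :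
    Function.Surjective (hermiteMap K y) := by
  have hle := knots_mono y _ hmono
  have hab : y 0 < y (2*K+1) :=
    (hmono 0 (by omega)).trans_le (hle 1 _ (by omega) le_rfl)
  rw [← LinearMap.injective_iff_surjective_of_finrank_eq_finrank]
  · rw [injective_iff_map_eq_zero]
    intro c hc
    have e0 := fun i => congrFun (congrArg Prod.fst hc) i
    have e1 := fun i => congrFun (congrArg Prod.snd hc) i
    refine splineMap_inj K y hmono c (spline_unique K y hmono _
      (splineMap_contDiff K y c).contDiffOn (splineMap_piece K y hmono c) ?_ ?_)
    · intro i hi; exact e0 ⟨i, hi⟩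
    · intro i hi
      rw [(splineMap_differentiable K y c _).derivWithin (uniqueDiffOn_Icc hab _
        ⟨hle 0 i (by omega) (by omega), hle i _ (by omega) le_rfl⟩)]
      exact e1 ⟨i, hi⟩
  · simp; omega

theorem stmt0 (k : ℕ) (hk : 2 ≤ k) (a b : ℝ) (hab : a < b)
    (y : ℕ → ℝ) (hy0 : y 0 = a) (hyl : y (2*k-3) = b)
    (hmono : ∀ i, i < 2*k-3 → y i < y (i+1))
    (f : ℝ → ℝ) (hf : ContDiff ℝ 1 f) :
    (∃ H : ℝ → ℝ, IsHermiteSplineInterp k y f H) ∧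
    (∀ H₁ H₂ : ℝ → ℝ, IsHermiteSplineInterp k y f H₁ →
      IsHermiteSplineInterp k y f H₂ → EqOn H₁ H₂ (Icc a b)) := by
  obtain ⟨K, rfl⟩ : ∃ K, k = K + 2 := ⟨k - 2, by omega⟩
  have e1 : 2*(K+2)-3 = 2*K+1 := by omega
  have e2 : 2*(K+2)-2 = 2*K+2 := by omega
  have e3 : 2*(K+2)-1 = 2*K+3 := by omega
  unfold IsHermiteSplineInterp
  rw [e1] at hyl hmono
  simp only [e1, e2, e3]
  have hle := knots_mono y _ hmono
  have hab' : y 0 < y (2*K+1) := by rw [hy0, hyl]; exact hab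
  have hU : UniqueDiffOn ℝ (Icc (y 0) (y (2*K+1))) := uniqueDiffOn_Icc hab'
  have hmem : ∀ i, i < 2*K+2 → y i ∈ Icc (y 0) (y (2*K+1)) := fun i hi =>
    ⟨hle 0 i (by omega) (by omega), hle i _ (by omega) le_rfl⟩
  constructor
  · obtain ⟨c, hc⟩ := hermiteMap_surj K y hmono (fun i => f (y i),
      fun i => derivWithin f (Icc (y 0) (y (2*K+1))) (y i))
    have e0 := fun i => congrFun (congrArg Prod.fst hc) i
    have e1 := fun i => congrFun (congrArg Prod.snd hc) i
    refine ⟨splineMap K y c, (splineMap_contDiff K y c).contDiffOn,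
      splineMap_piece K y hmono c, fun i hi => ⟨e0 ⟨i, hi⟩, ?_⟩⟩
    rw [(splineMap_differentiable K y c _).derivWithin (hU _ (hmem i hi))]
    exact e1 ⟨i, hi⟩
  · rintro H₁ H₂ ⟨hC1, hp1, hi1⟩ ⟨hC2, hp2, hi2⟩
    have key := spline_unique K y hmono (H₁ - H₂) (hC1.sub hC2) ?_ ?_ ?_
    · intro x hx
      rw [← hy0, ← hyl] at hx
      exact sub_eq_zero.1 (key x hx)
    · intro i hi
      obtain ⟨p, hp, hpe⟩ := hp1 i hi
      obtain ⟨q, hq, hqe⟩ := hp2 i hi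
      refine ⟨p - q, (Polynomial.natDegree_sub_le _ _).trans (max_le hp hq), fun x hx => ?_⟩
      rw [Pi.sub_apply, hpe x hx, hqe x hx, Polynomial.eval_sub]
    · intro i hi
      rw [Pi.sub_apply, (hi1 i hi).1, (hi2 i hi).1, sub_self]
    · intro i hi
      have d1 := hC1.differentiableOn (by simp) _ (hmem i hi)
      have d2 := hC2.differentiableOn (by simp) _ (hmem i hi)
      rw [derivWithin_sub d1 d2, (hi1 i hi).2, (hi2 i hi).2, sub_self]
end

section
/- Let k ≥ 2 be an integer, τ_0 < τ_1 < ⋯ < τ_{2k−3} reals, and c ∈ [τ_0, τ_{2k−3}]. Let Y_0 : [τ_0, τ_{2k−3}] → ℝ be 2k-times continuously differentiable and set g := Y_0^{(2k)}. Let Y : [τ_0, τ_{2k−3}] → ℝ be continuously differentiable and suppose (𝓗_k Y)(c) ≥ Y(c). Define E := (𝓗_k (Y − Y_0))(c) − (Y − Y_0)(c) and R := −∫_{τ_0}^{τ_{2k−3}} K(c,u)·(g(u) − g(c)) du, where K(c,u) := (c−u)_+^{2k−1}/(2k−1)! − (𝓗_k φ_u)(c) with φ_u(t) := (t−u)_+^{2k−1}/(2k−1)!.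 Then g(c)·e_k(c) ≤ E + R. -/
open Set

theorem tau_lt {M : ℕ} {τ : ℕ → ℝ} (hτ : ∀ i, i < M → τ i < τ (i+1)) :
    ∀ j i, i < j → j ≤ M → τ i < τ j := by
  intro j
  induction j with
  | zero => intro i h; omega
  | succ j ih =>
    intro i h hj
    have h1 := hτ j (by omega)
    rcases Nat.lt_succ_iff_lt_or_eq.mp h with h2 | h2
    · exact (ih i h2 (by omega)).trans h1
    · subst h2; exact h1

theorem tau_le {M : ℕ} {τ : ℕ → ℝ} (hτ : ∀ i, i < M → τ i < τ (i+1))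
    (i j : ℕ) (h : i ≤ j) (hj : j ≤ M) : τ i ≤ τ j := by
  rcases h.lt_or_eq with h | h
  · exact (tau_lt hτ j i h hj).le
  · rw [h]

theorem exists_piece {M : ℕ} (hM : 0 < M) {τ : ℕ → ℝ} {x : ℝ} (hx : x ∈ Icc (τ 0) (τ M)) :
    ∃ i, i < M ∧ x ∈ Icc (τ i) (τ (i+1)) := by
  induction M with
  | zero => omega
  | succ M ih =>
    rcases le_total x (τ M) with h | h
    · rcases Nat.eq_zero_or_pos M with h0 | h0
      · subst h0
        exact ⟨0, by omega, hx⟩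
      · obtain ⟨i, hi, h⟩ := ih h0 ⟨hx.1, h⟩
        exact ⟨i, by omega, h⟩
    · exact ⟨M, by omega, h, hx.2⟩

theorem hasDer {a b : ℝ} (hab : a < b) {d m : ℕ} {S : ℝ → ℝ}
    (hS : ContDiffOn ℝ d S (Icc a b)) (hm : m < d) {t : ℝ} (ht : t ∈ Icc a b) :
    HasDerivWithinAt (iteratedDerivWithin m S (Icc a b))
      (iteratedDerivWithin (m+1) S (Icc a b) t) (Icc a b) t := by
  rw [iteratedDerivWithin_succ]
  exact (hS.differentiableOn_iteratedDerivWithin (by exact_mod_cast hm)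
    (uniqueDiffOn_Icc hab) t ht).hasDerivWithinAt

theorem piece_deriv {a b x y : ℝ} (hab : a < b) (hxy : x < y) (hsub : Icc x y ⊆ Icc a b) {d : ℕ}
    {S : ℝ → ℝ} (hS : ContDiffOn ℝ d S (Icc a b)) (p : Polynomial ℝ)
    (hp : ∀ t ∈ Icc x y, S t = p.eval t) :
    ∀ m, m ≤ d → ∀ t ∈ Icc x y,
      iteratedDerivWithin m S (Icc a b) t = (Polynomial.derivative^[m] p).eval t := by
  intro m
  induction m with
  | zero => intro _ t ht; simpa using hp t ht
  | succ m ih =>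
    intro hm t ht
    have h1 := (hasDer hab hS (m := m) (by omega) (hsub ht)).mono hsub
    have h2 : HasDerivWithinAt (iteratedDerivWithin m S (Icc a b))
        ((Polynomial.derivative^[m+1] p).eval t) (Icc x y) t := by
      rw [Function.iterate_succ_apply']
      exact ((Polynomial.derivative^[m] p).hasDerivAt t).hasDerivWithinAt.congr
        (fun s hs => ih (by omega) s hs) (ih (by omega) t ht)
    exact (uniqueDiffOn_Icc hxy t ht).eq_deriv _ h1 h2

theorem bump_pos {f f' : ℝ → ℝ} {p q : ℝ} (hf : ContinuousOn f (Icc p q))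
    (hd : ∀ x ∈ Ioo p q, HasDerivAt f (f' x) x) (hp : f p = 0) (hq : f q = 0)
    {y : ℝ} (hy : y ∈ Ioo p q) (hfy : 0 < f y) :
    ∃ e ∈ Ioo p q, f' e = 0 ∧ (∃ u ∈ Ioo p e, f' u ≠ 0) ∧ (∃ v ∈ Ioo e q, f' v ≠ 0) := by
  obtain ⟨e, he, hmax⟩ := isCompact_Icc.exists_isMaxOn ⟨y, Ioo_subset_Icc_self hy⟩ hf
  have hey : f y ≤ f e := hmax (Ioo_subset_Icc_self hy)
  have hep : e ≠ p := by rintro rfl; linarith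
  have heq : e ≠ q := by rintro rfl; linarith
  have he' : e ∈ Ioo p q := ⟨lt_of_le_of_ne he.1 (Ne.symm hep), lt_of_le_of_ne he.2 heq⟩
  refine ⟨e, he', ?_, ?_, ?_⟩
  · exact (hmax.isLocalMax (Icc_mem_nhds he'.1 he'.2)).hasDerivAt_eq_zero (hd e he')
  · obtain ⟨u, hu, h⟩ := exists_hasDerivAt_eq_slope f f' he'.1
      (hf.mono (Icc_subset_Icc_right he.2)) (fun x hx => hd x ⟨hx.1, hx.2.trans he'.2⟩)
    refine ⟨u, hu, ?_⟩
    rw [h, hp]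
    have := he'.1
    exact div_ne_zero (by linarith) (by linarith)
  · obtain ⟨u, hu, h⟩ := exists_hasDerivAt_eq_slope f f' he'.2
      (hf.mono (Icc_subset_Icc_left he.1)) (fun x hx => hd x ⟨he'.1.trans hx.1, hx.2⟩)
    refine ⟨u, hu, ?_⟩
    rw [h, hq]
    have := he'.2
    exact div_ne_zero (by linarith) (by linarith)

theorem bump {f f' : ℝ → ℝ} {p q : ℝ} (hf : ContinuousOn f (Icc p q))
    (hd : ∀ x ∈ Ioo p q, HasDerivAt f (f' x) x) (hp : f p = 0) (hq : f q = 0)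
    {y : ℝ} (hy : y ∈ Ioo p q) (hfy : f y ≠ 0) :
    ∃ e ∈ Ioo p q, f' e = 0 ∧ (∃ u ∈ Ioo p e, f' u ≠ 0) ∧ (∃ v ∈ Ioo e q, f' v ≠ 0) := by
  rcases lt_or_gt_of_ne hfy with h | h
  · have := bump_pos (f := fun x => - f x) (f' := fun x => - f' x) hf.neg
      (fun x hx => (hd x hx).fun_neg) (by simp [hp]) (by simp [hq]) hy (by simpa using h)
    simpa using this
  · exact bump_pos hf hd hp hq hy h

/-- `f` has `n` zeros in `[a,b]` separated by nonzero values. -/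
def SepZ (f : ℝ → ℝ) (a b : ℝ) (n : ℕ) : Prop :=
  ∃ z : ℕ → ℝ, (∀ i, i < n → z i ∈ Icc a b ∧ f (z i) = 0) ∧
    ∀ i, i + 1 < n → z i < z (i+1) ∧ ∃ y ∈ Ioo (z i) (z (i+1)), f y ≠ 0

theorem SepZ.rolle {f f' : ℝ → ℝ} {a b : ℝ} {n : ℕ} (hf : ContinuousOn f (Icc a b))
    (hd : ∀ x ∈ Ioo a b, HasDerivAt f (f' x) x) (h : SepZ f a b (n+1)) : SepZ f' a b n := by
  obtain ⟨z, hz, hs⟩ := h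
  have key : ∀ i, ∃ e, i < n → e ∈ Ioo (z i) (z (i+1)) ∧ f' e = 0 ∧
      (∃ u ∈ Ioo (z i) e, f' u ≠ 0) ∧ (∃ v ∈ Ioo e (z (i+1)), f' v ≠ 0) := by
    intro i
    by_cases hi : i < n
    · obtain ⟨h1, y, hy, hfy⟩ := hs i (by omega)
      have ha := (hz i (by omega)).1.1
      have hb := (hz (i+1) (by omega)).1.2
      obtain ⟨e, he, h⟩ := bump (f := f) (f' := f') (hf.mono (Icc_subset_Icc ha hb))
        (fun x hx => hd x ⟨ha.trans_lt hx.1, hx.2.trans_le hb⟩)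
        (hz i (by omega)).2 (hz (i+1) (by omega)).2 hy hfy
      exact ⟨e, fun _ => ⟨he, h⟩⟩
    · exact ⟨0, fun h => absurd h hi⟩
  choose e he using key
  refine ⟨e, fun i hi => ⟨⟨?_, ?_⟩, (he i hi).2.1⟩, fun i hi => ?_⟩
  · exact (hz i (by omega)).1.1.trans (he i hi).1.1.le
  · exact (he i hi).1.2.le.trans (hz (i+1) (by omega)).1.2
  · obtain ⟨h1, _, _, v, hv, hv0⟩ := he i (by omega)
    obtain ⟨h2, _⟩ := he (i+1) (by omega)
    exact ⟨h1.2.trans h2.1, v, ⟨hv.1, hv.2.trans h2.1⟩, hv0⟩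

theorem SepZ.mono {z : ℕ → ℝ} {n : ℕ} (h : ∀ i, i + 1 < n → z i < z (i+1)) :
    ∀ j i, i ≤ j → j < n → z i ≤ z j := by
  intro j
  induction j with
  | zero => intro i hi _; have : i = 0 := by omega
            rw [this]
  | succ j ih =>
    intro i hi hj
    rcases Nat.le_succ_iff.mp hi with h1 | h1
    · exact (ih i h1 (by omega)).trans (h j hj).le
    · rw [h1]

theorem poly_zero {d : ℕ} {q : Polynomial ℝ} (hq : q.natDegree ≤ d + 1) {s t : ℝ} (hst : t ≠ s)
    (h : ∀ m ≤ d, (Polynomial.derivative^[m] q).eval s = 0) (ht : q.eval t = 0) : q = 0 := by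
  by_contra hne
  have h1 : d < q.rootMultiplicity s :=
    Polynomial.lt_rootMultiplicity_of_isRoot_iterate_derivative hne (fun m hm => h m hm)
  have h2 : (Polynomial.X - Polynomial.C s) ^ (d+1) ∣ q :=
    (Polynomial.le_rootMultiplicity_iff hne).mp h1
  obtain ⟨r, rfl⟩ := h2
  have hr : r ≠ 0 := by rintro rfl; simp at hne
  rw [Polynomial.natDegree_mul (pow_ne_zero _ (Polynomial.X_sub_C_ne_zero s)) hr,
    Polynomial.natDegree_pow, Polynomial.natDegree_X_sub_C] at hq
  have hr0 : r.natDegree = 0 := by omega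
  rw [Polynomial.eq_C_of_natDegree_eq_zero hr0] at ht hr
  simp only [Polynomial.eval_mul, Polynomial.eval_pow, Polynomial.eval_sub, Polynomial.eval_X,
    Polynomial.eval_C] at ht
  rcases mul_eq_zero.mp ht with h | h
  · exact hst (sub_eq_zero.mp (pow_eq_zero_iff (by omega) |>.mp h))
  · rw [h] at hr; simp at hr

theorem spline_unique_s2 {d M : ℕ} (hM : 0 < M) (hd : d = M + 1) {τ : ℕ → ℝ}
    (hτ : ∀ i, i < M → τ i < τ (i+1)) {S : ℝ → ℝ}
    (hS : ContDiffOn ℝ d S (Icc (τ 0) (τ M)))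
    (hp : ∀ i, i < M → ∃ p : Polynomial ℝ, p.natDegree ≤ d + 1 ∧
      ∀ x ∈ Icc (τ i) (τ (i+1)), S x = p.eval x)
    (h0 : ∀ i, i ≤ M → S (τ i) = 0 ∧ derivWithin S (Icc (τ 0) (τ M)) (τ i) = 0) :
    ∀ x ∈ Icc (τ 0) (τ M), S x = 0 := by
  have hab : τ 0 < τ M := tau_lt hτ M 0 hM le_rfl
  have hsub : ∀ i, i < M → Icc (τ i) (τ (i+1)) ⊆ Icc (τ 0) (τ M) := fun i hi =>
    Icc_subset_Icc (tau_le hτ 0 i (by omega) (by omega)) (tau_le hτ (i+1) M (by omega) (by omega))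
  have hp' : ∀ i, ∃ p : Polynomial ℝ, i < M → p.natDegree ≤ d + 1 ∧
      ∀ x ∈ Icc (τ i) (τ (i+1)), S x = p.eval x := by
    intro i
    by_cases hi : i < M
    · obtain ⟨p, h⟩ := hp i hi
      exact ⟨p, fun _ => h⟩
    · exact ⟨0, fun h => absurd h hi⟩
  choose p hdeg using hp'
  have hpd : ∀ i, i < M → ∀ m, m ≤ d → ∀ t ∈ Icc (τ i) (τ (i+1)),
      iteratedDerivWithin m S (Icc (τ 0) (τ M)) t = (Polynomial.derivative^[m] (p i)).eval t :=
    fun i hi => piece_deriv hab (hτ i hi) (hsub i hi) hS (p i) (hdeg i hi).2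
  have hprop : ∀ i, i + 1 < M → (p i = 0 ↔ p (i+1) = 0) := by
    intro i hi
    have l1 := (hτ i (by omega))
    have l2 := (hτ (i+1) (by omega))
    have e : ∀ m ≤ d, (Polynomial.derivative^[m] (p i)).eval (τ (i+1)) =
        (Polynomial.derivative^[m] (p (i+1))).eval (τ (i+1)) := by
      intro m hm
      rw [← hpd i (by omega) m hm _ ⟨l1.le, le_rfl⟩, ← hpd (i+1) hi m hm _ ⟨le_rfl, l2.le⟩]
    constructor
    · intro h
      refine poly_zero (hdeg (i+1) hi).1 (t := τ (i+1+1)) l2.ne' (s := τ (i+1)) ?_ ?_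
      · intro m hm
        rw [← e m hm, h]; simp
      · rw [← (hdeg (i+1) hi).2 _ ⟨l2.le, le_rfl⟩]
        exact (h0 _ (by omega)).1
    · intro h
      refine poly_zero (hdeg i (by omega)).1 (t := τ i) l1.ne (s := τ (i+1)) ?_ ?_
      · intro m hm
        rw [e m hm, h]; simp
      · rw [← (hdeg i (by omega)).2 _ ⟨le_rfl, l1.le⟩]
        exact (h0 _ (by omega)).1
  have hall : ∀ i, i < M → (p i = 0 ↔ p 0 = 0) := by
    intro i
    induction i with
    | zero => simp
    | succ i ih => intro hi; rw [← hprop i hi]; exact ih (by omega)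
  suffices hz : p 0 = 0 by
    intro x hx
    obtain ⟨i, hi, hxi⟩ := exists_piece hM hx
    rw [(hdeg i hi).2 x hxi, (hall i hi).mpr hz]; simp
  by_contra hne
  have hnz : ∀ i, i < M → ∃ y ∈ Ioo (τ i) (τ (i+1)), S y ≠ 0 := by
    intro i hi
    by_contra! hcon
    apply hne
    rw [← hall i hi]
    refine Polynomial.eq_zero_of_infinite_isRoot _ ((Ioo_infinite (hτ i hi)).mono ?_)
    intro y hy
    change (p i).eval y = 0
    rw [← (hdeg i hi).2 y (Ioo_subset_Icc_self hy)]
    exact hcon y hy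
  set F := fun m => iteratedDerivWithin m S (Icc (τ 0) (τ M)) with hF
  have hFc : ∀ m, m ≤ d → ContinuousOn (F m) (Icc (τ 0) (τ M)) := fun m hm =>
    hS.continuousOn_iteratedDerivWithin (by exact_mod_cast hm) (uniqueDiffOn_Icc hab)
  have hFd : ∀ m, m < d → ∀ x ∈ Ioo (τ 0) (τ M), HasDerivAt (F m) (F (m+1) x) x :=
    fun m hm x hx => (hasDer hab hS hm (Ioo_subset_Icc_self hx)).hasDerivAt
      (Icc_mem_nhds hx.1 hx.2)
  have hF0 : F 0 = S := by simp [hF]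
  have hF1 : ∀ i, i ≤ M → F 1 (τ i) = 0 := by
    intro i hi
    simp only [hF]
    rw [iteratedDerivWithin_one]
    exact (h0 i hi).2
  -- first step
  have step1 : SepZ (F 1) (τ 0) (τ M) (2*M+1) := by
    have key : ∀ i, ∃ e, i < M → e ∈ Ioo (τ i) (τ (i+1)) ∧ F 1 e = 0 ∧
        (∃ u ∈ Ioo (τ i) e, F 1 u ≠ 0) ∧ (∃ v ∈ Ioo e (τ (i+1)), F 1 v ≠ 0) := by
      intro i
      by_cases hi : i < M
      · obtain ⟨y, hy, hSy⟩ := hnz i hi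
        have hsi := hsub i hi
        obtain ⟨e, he, h⟩ := bump (f := F 0) (f' := F 1) ((hFc 0 (by omega)).mono hsi)
          (fun x hx => hFd 0 (by omega) x
            ⟨(hsi (left_mem_Icc.mpr (hτ i hi).le)).1.trans_lt hx.1,
              hx.2.trans_le (hsi (right_mem_Icc.mpr (hτ i hi).le)).2⟩)
          (by rw [hF0]; exact (h0 i hi.le).1) (by rw [hF0]; exact (h0 (i+1) hi).1) hy
          (by rw [hF0]; exact hSy)
        exact ⟨e, fun _ => ⟨he, h⟩⟩
      · exact ⟨0, fun h => absurd h hi⟩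
    choose e he using key
    refine ⟨fun j => if j % 2 = 0 then τ (j/2) else e (j/2), fun j hj => ?_, fun j hj => ?_⟩
    · rcases Nat.mod_two_eq_zero_or_one j with h | h
      · simp only [h, if_true]
        exact ⟨⟨tau_le hτ _ _ (by omega) (by omega), tau_le hτ _ _ (by omega) (by omega)⟩,
          hF1 _ (by omega)⟩
      · simp only [h, one_ne_zero, if_false]
        obtain ⟨h1, h2, _⟩ := he (j/2) (by omega)
        exact ⟨hsub (j/2) (by omega) (Ioo_subset_Icc_self h1), h2⟩
    · obtain ⟨h1, h2, h3, h4⟩ := he (j/2) (by omega)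
      rcases Nat.mod_two_eq_zero_or_one j with h | h
      · have e1 : (j+1) % 2 = 1 := by omega
        have e2 : (j+1)/2 = j/2 := by omega
        simp only [h, e1, e2, one_ne_zero, if_true, if_false]
        exact ⟨h1.1, h3⟩
      · have e1 : (j+1) % 2 = 0 := by omega
        have e2 : (j+1)/2 = j/2+1 := by omega
        simp only [h, e1, e2, one_ne_zero, if_true, if_false]
        exact ⟨h1.2, h4⟩
  have step2 : ∀ m, m ≤ M → SepZ (F (m+1)) (τ 0) (τ M) (2*M+1-m) := by
    intro m
    induction m with
    | zero => intro _; exact step1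
    | succ m ih =>
      intro hm
      have := ih (by omega)
      rw [show 2*M+1-m = (2*M+1-(m+1)) + 1 by omega] at this
      exact this.rolle (hFc (m+1) (by omega)) (hFd (m+1) (by omega))
  have step3 := step2 M le_rfl
  rw [← hd, show 2*M+1-M = M+1 by omega] at step3
  obtain ⟨z, hz, hs⟩ := step3
  have hpc : ∀ j, ∃ i, j < M+1 → i < M ∧ z j ∈ Icc (τ i) (τ (i+1)) := by
    intro j
    by_cases hj : j < M+1
    · obtain ⟨i, hi⟩ := exists_piece hM (hz j hj).1
      exact ⟨i, fun _ => hi⟩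
    · exact ⟨0, fun h => absurd h hj⟩
  choose idx hidx using hpc
  obtain ⟨j, hj, j', hj', hjj, heq⟩ := Finset.exists_ne_map_eq_of_card_lt_of_maps_to
    (s := Finset.range (M+1)) (t := Finset.range M) (by simp) (f := idx)
    (fun j hj => by
      have := (hidx j (by simpa using hj)).1
      simpa using this)
  have fin : ∀ j j', j < j' → j' < M+1 → idx j = idx j' → False := by
    intro j j' hjj hj' heq
    obtain ⟨hi, hzj⟩ := hidx j (by omega)
    obtain ⟨_, hzj'⟩ := hidx j' (by omega)
    rw [← heq] at hzj'
    obtain ⟨hlt, y, hy, hy0⟩ := hs j (by omega)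
    have hle : z (j+1) ≤ z j' := SepZ.mono (fun i hi => (hs i hi).1) j' (j+1) (by omega) hj'
    have a1 := hpd (idx j) hi d le_rfl _ hzj
    have a2 := hpd (idx j) hi d le_rfl _ hzj'
    have a3 := hpd (idx j) hi d le_rfl y ⟨hzj.1.trans hy.1.le, hy.2.le.trans (hle.trans hzj'.2)⟩
    have b1 := (hz j (by omega)).2
    have b2 := (hz j' (by omega)).2
    simp only [hF] at b1 b2 hy0
    rw [a1] at b1
    rw [a2] at b2
    rw [a3] at hy0
    have hq : (Polynomial.derivative^[d] (p (idx j))).natDegree ≤ 0 + 1 := by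
      have := Polynomial.natDegree_iterate_derivative (p (idx j)) d
      have := (hdeg (idx j) hi).1
      omega
    have := poly_zero (d := 0) hq (s := z j) (t := z j') (by linarith)
      (fun m hm => by
        have : m = 0 := by omega
        subst this; simpa using b1) b2
    rw [this] at hy0
    simp at hy0
  rcases lt_or_gt_of_ne hjj with h | h
  · exact fin j j' h (by simpa using hj') heq
  · exact fin j' j h (by simpa using hj) heq.symm

/-- The space of splines of degree `d+1` with knots `τ 0, …, τ M`. -/
def splineSub (d M : ℕ) (τ : ℕ → ℝ) : Submodule ℝ (ℝ → ℝ) where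
  carrier := {S | ContDiffOn ℝ d S (Icc (τ 0) (τ M)) ∧
    ∀ i, i < M → ∃ p : Polynomial ℝ, p.natDegree ≤ d + 1 ∧
      ∀ x ∈ Icc (τ i) (τ (i+1)), S x = p.eval x}
  add_mem' := by
    rintro S T ⟨h1, h2⟩ ⟨h3, h4⟩
    refine ⟨h1.add h3, fun i hi => ?_⟩
    obtain ⟨p, hp, hp'⟩ := h2 i hi
    obtain ⟨q, hq, hq'⟩ := h4 i hi
    refine ⟨p + q, Polynomial.natDegree_add_le_of_degree_le hp hq, fun x hx => ?_⟩
    simp [hp' x hx, hq' x hx]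
  zero_mem' := ⟨contDiffOn_const, fun i _ => ⟨0, by simp, by simp⟩⟩
  smul_mem' := by
    rintro r S ⟨h1, h2⟩
    refine ⟨h1.const_smul r, fun i hi => ?_⟩
    obtain ⟨p, hp, hp'⟩ := h2 i hi
    refine ⟨r • p, (Polynomial.natDegree_smul_le r p).trans hp, fun x hx => ?_⟩
    simp [hp' x hx]

theorem spline_diff {d M : ℕ} (hd : 0 < d) {τ : ℕ → ℝ} {S : ℝ → ℝ} (hS : S ∈ splineSub d M τ)
    {x : ℝ} (hx : x ∈ Icc (τ 0) (τ M)) : DifferentiableWithinAt ℝ S (Icc (τ 0) (τ M)) x :=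
  (hS.1.differentiableOn (by exact_mod_cast hd.ne')) x hx

theorem exists_functional {d M : ℕ} (hM : 0 < M) (hd : d = M + 1) {τ : ℕ → ℝ}
    (hτ : ∀ i, i < M → τ i < τ (i+1)) {c : ℝ} (hc : c ∈ Icc (τ 0) (τ M)) :
    ∃ α β : Fin (M+1) → ℝ, ∀ S ∈ splineSub d M τ,
      S c = ∑ i, (α i * S (τ i) + β i * derivWithin S (Icc (τ 0) (τ M)) (τ i)) := by
  have hmem : ∀ i : Fin (M+1), τ i ∈ Icc (τ 0) (τ M) := fun i =>
    ⟨tau_le hτ _ _ (Nat.zero_le _) (by omega), tau_le hτ _ _ (by omega) le_rfl⟩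
  let ev : ℝ → (splineSub d M τ →ₗ[ℝ] ℝ) := fun x =>
    { toFun := fun S => S.1 x
      map_add' := fun _ _ => rfl
      map_smul' := fun _ _ => rfl }
  let dv : Fin (M+1) → (splineSub d M τ →ₗ[ℝ] ℝ) := fun i =>
    { toFun := fun S => derivWithin S.1 (Icc (τ 0) (τ M)) (τ i)
      map_add' := fun S T => derivWithin_add (spline_diff (by omega) S.2 (hmem i))
        (spline_diff (by omega) T.2 (hmem i))
      map_smul' := fun r S => derivWithin_const_smul r (spline_diff (by omega) S.2 (hmem i)) }
  have key : ev c ∈ Submodule.span ℝ (range (Sum.elim (fun i : Fin (M+1) => ev (τ i)) dv)) := by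
    apply mem_span_of_iInf_ker_le_ker
    intro S hS
    simp only [Submodule.mem_iInf, LinearMap.mem_ker] at hS
    rw [LinearMap.mem_ker]
    refine spline_unique_s2 hM hd hτ S.2.1 S.2.2 (fun i hi => ⟨?_, ?_⟩) c hc
    · exact hS (Sum.inl ⟨i, by omega⟩)
    · exact hS (Sum.inr ⟨i, by omega⟩)
  obtain ⟨w, hw⟩ := (Submodule.mem_span_range_iff_exists_fun ℝ).1 key
  refine ⟨fun i => w (Sum.inl i), fun i => w (Sum.inr i), fun S hS => ?_⟩
  have := LinearMap.congr_fun hw ⟨S, hS⟩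
  rw [Fintype.sum_sum_type] at this
  simp only [LinearMap.add_apply, LinearMap.sum_apply, LinearMap.smul_apply, Sum.elim_inl,
    Sum.elim_inr, smul_eq_mul] at this
  rw [Finset.sum_add_distrib]
  exact this.symm

theorem taylor_int {a b : ℝ} (hab : a < b) {n : ℕ} (hn : 0 < n) {f : ℝ → ℝ}
    (hf : ContDiffOn ℝ (n+1 : ℕ) f (Icc a b)) {x : ℝ} (hx : x ∈ Icc a b) :
    f x = taylorWithinEval f n (Icc a b) a x +
      ∫ u in a..b, (max (x - u) 0 ^ n / (Nat.factorial n : ℝ)) *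
        iteratedDerivWithin (n+1) f (Icc a b) u := by
  have hu := uniqueDiffOn_Icc hab
  have hg : ContinuousOn (iteratedDerivWithin (n+1) f (Icc a b)) (Icc a b) :=
    hf.continuousOn_iteratedDerivWithin le_rfl hu
  have hfn : ContDiffOn ℝ n f (Icc a b) := hf.of_le (by exact_mod_cast Nat.le_succ n)
  have hdf : DifferentiableOn ℝ (iteratedDerivWithin n f (Icc a b)) (Icc a b) :=
    hf.differentiableOn_iteratedDerivWithin (by exact_mod_cast Nat.lt_succ_self n) hu
  have hφ : Continuous (fun u : ℝ => max (x - u) 0 ^ n / (Nat.factorial n : ℝ)) := by fun_prop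
  have hcont : ContinuousOn (fun u => (max (x - u) 0 ^ n / (Nat.factorial n : ℝ)) *
        iteratedDerivWithin (n+1) f (Icc a b) u) (Icc a b) := hφ.continuousOn.mul hg
  have hi1 : IntervalIntegrable (fun u => (max (x - u) 0 ^ n / (Nat.factorial n : ℝ)) *
        iteratedDerivWithin (n+1) f (Icc a b) u) MeasureTheory.volume a x :=
    (hcont.mono (by rw [uIcc_of_le hx.1]; exact Icc_subset_Icc_right hx.2)).intervalIntegrable
  have hi2 : IntervalIntegrable (fun u => (max (x - u) 0 ^ n / (Nat.factorial n : ℝ)) *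
        iteratedDerivWithin (n+1) f (Icc a b) u) MeasureTheory.volume x b :=
    (hcont.mono (by rw [uIcc_of_le hx.2]; exact Icc_subset_Icc_left hx.1)).intervalIntegrable
  rw [← intervalIntegral.integral_add_adjacent_intervals hi1 hi2]
  have z : ∫ u in x..b, (max (x - u) 0 ^ n / (Nat.factorial n : ℝ)) *
        iteratedDerivWithin (n+1) f (Icc a b) u = 0 := by
    rw [intervalIntegral.integral_congr (g := fun _ => (0:ℝ))]
    · simp
    · intro u hu
      rw [uIcc_of_le hx.2] at hu
      have : max (x - u) 0 = 0 := max_eq_right (by linarith [hu.1])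
      simp [this, hn.ne']
  have y : ∫ u in a..x, (max (x - u) 0 ^ n / (Nat.factorial n : ℝ)) *
        iteratedDerivWithin (n+1) f (Icc a b) u = taylorWithinEval f n (Icc a b) x x -
          taylorWithinEval f n (Icc a b) a x := by
    have hder : ∀ t ∈ Icc a b, HasDerivWithinAt (fun y => taylorWithinEval f n (Icc a b) y x) _
        (Icc a b) t := fun t ht => hasDerivWithinAt_taylorWithinEval_at_Icc x hab ht hfn hdf
    apply intervalIntegral.integral_eq_sub_of_hasDerivAt_of_le hx.1
      (f := fun y => taylorWithinEval f n (Icc a b) y x) _ _ hi1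
    · intro t ht
      exact ((hder t ⟨ht.1, ht.2.trans hx.2⟩).continuousWithinAt).mono (Icc_subset_Icc_right hx.2)
    · intro t ht
      have h1 := (hder t ⟨ht.1.le, ht.2.le.trans hx.2⟩).hasDerivAt
        (Icc_mem_nhds ht.1 (ht.2.trans_le hx.2))
      convert h1 using 1
      rw [max_eq_left (by linarith [ht.2]), smul_eq_mul]
      ring
  rw [y, z, taylorWithinEval_self]
  ring

theorem taylor_poly (f : ℝ → ℝ) (n : ℕ) (s : Set ℝ) (a : ℝ) :
    ∃ p : Polynomial ℝ, p.natDegree ≤ n ∧ ∀ x, taylorWithinEval f n s a x = p.eval x := by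
  refine ⟨∑ k ∈ Finset.range (n+1), Polynomial.C ((Nat.factorial k : ℝ)⁻¹ *
    iteratedDerivWithin k f s a) * (Polynomial.X - Polynomial.C a) ^ k, ?_, fun x => ?_⟩
  · apply Polynomial.natDegree_sum_le_of_forall_le
    intro k hk
    refine (Polynomial.natDegree_C_mul_le _ _).trans ?_
    rw [Polynomial.natDegree_pow, Polynomial.natDegree_X_sub_C]
    have := Finset.mem_range.mp hk
    omega
  · rw [taylor_within_apply, Polynomial.eval_finsetSum]
    refine Finset.sum_congr rfl fun k _ => ?_
    simp
    ring

theorem phi_deriv (n : ℕ) (hn : 0 < n) (u t : ℝ) :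
    HasDerivAt (fun t : ℝ => max (t - u) 0 ^ (n+1) / (Nat.factorial (n+1) : ℝ))
      (max (t - u) 0 ^ n / (Nat.factorial n : ℝ)) t := by
  have base : HasDerivAt (fun t : ℝ => max (t - u) 0 ^ (n+1))
      (((n+1 : ℕ) : ℝ) * max (t - u) 0 ^ n) t := by
    have hp : HasDerivAt (fun t : ℝ => (t - u) ^ (n+1)) (((n+1 : ℕ) : ℝ) * (t - u) ^ n) t := by
      have h := ((hasDerivAt_id' t).sub_const u).fun_pow (n+1)
      rw [mul_one] at h
      exact h
    rcases lt_trichotomy t u with h | h | h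
    · rw [max_eq_right (by linarith), zero_pow hn.ne', mul_zero]
      refine (hasDerivAt_const t (0:ℝ)).congr_of_eventuallyEq ?_
      filter_upwards [Iio_mem_nhds h] with s hs
      have hs' : s < u := hs
      rw [max_eq_right (by linarith), zero_pow (by omega)]
    · subst h
      have h0 : (((n+1 : ℕ) : ℝ) * max (t - t) 0 ^ n) = 0 := by simp [hn.ne']
      rw [h0]
      have hl : HasDerivWithinAt (fun s : ℝ => max (s - t) 0 ^ (n+1)) 0 (Iic t) t := by
        refine (hasDerivWithinAt_const t (Iic t) (0:ℝ)).congr ?_ (by simp)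
        intro s hs
        have hs' : s ≤ t := hs
        rw [max_eq_right (by linarith), zero_pow (by omega)]
      have hr : HasDerivWithinAt (fun s : ℝ => max (s - t) 0 ^ (n+1)) 0 (Ici t) t := by
        have h1 := hp.hasDerivWithinAt (s := Ici t)
        simp only [sub_self, zero_pow hn.ne', mul_zero] at h1
        refine h1.congr ?_ (by simp)
        intro s hs
        have hs' : t ≤ s := hs
        rw [max_eq_left (by linarith)]
      have := hl.union hr
      rwa [Iic_union_Ici, hasDerivWithinAt_univ] at this
    · rw [max_eq_left (by linarith)]
      refine hp.congr_of_eventuallyEq ?_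
      filter_upwards [Ioi_mem_nhds h] with s hs
      have hs' : u < s := hs
      rw [max_eq_left (by linarith)]
  have h := base.div_const (Nat.factorial (n+1) : ℝ)
  have h2 : (((n+1 : ℕ) : ℝ) * max (t - u) 0 ^ n) / (Nat.factorial (n+1) : ℝ) =
      max (t - u) 0 ^ n / (Nat.factorial n : ℝ) := by
    have : (Nat.factorial n : ℝ) ≠ 0 := by positivity
    have : (n : ℝ) + 1 ≠ 0 := by positivity
    rw [Nat.factorial_succ]
    push_cast
    field_simp
  rw [h2] at h
  exact h

/-- The Peano kernel, written with the functional `(α, β)`. -/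
noncomputable def peanoK (d M : ℕ) (τ : ℕ → ℝ) (c : ℝ) (α β : Fin (M+1) → ℝ) (u : ℝ) : ℝ :=
  max (c - u) 0 ^ (d+1) / (Nat.factorial (d+1) : ℝ) -
    ∑ i, (α i * (max (τ i - u) 0 ^ (d+1) / (Nat.factorial (d+1) : ℝ)) +
      β i * (max (τ i - u) 0 ^ d / (Nat.factorial d : ℝ)))

theorem peanoK_cont (d M : ℕ) (τ : ℕ → ℝ) (c : ℝ) (α β : Fin (M+1) → ℝ) :
    Continuous (peanoK d M τ c α β) := by
  unfold peanoK
  fun_prop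

theorem peano {d M : ℕ} (hM : 0 < M) (hd : d = M + 1) {τ : ℕ → ℝ}
    (hτ : ∀ i, i < M → τ i < τ (i+1)) {c : ℝ} (hc : c ∈ Icc (τ 0) (τ M))
    {α β : Fin (M+1) → ℝ} (hL : ∀ S ∈ splineSub d M τ,
      S c = ∑ i, (α i * S (τ i) + β i * derivWithin S (Icc (τ 0) (τ M)) (τ i)))
    {F : ℝ → ℝ} (hF : ContDiffOn ℝ (d+1+1 : ℕ) F (Icc (τ 0) (τ M))) :
    F c - ∑ i, (α i * F (τ i) + β i * derivWithin F (Icc (τ 0) (τ M)) (τ i)) =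
      ∫ u in (τ 0)..(τ M), peanoK d M τ c α β u *
        iteratedDerivWithin (d+1+1) F (Icc (τ 0) (τ M)) u := by
  have hab : τ 0 < τ M := tau_lt hτ M 0 hM le_rfl
  have hmem : ∀ i : Fin (M+1), τ i ∈ Icc (τ 0) (τ M) := fun i =>
    ⟨tau_le hτ _ _ (Nat.zero_le _) (by omega), tau_le hτ _ _ (by omega) le_rfl⟩
  have hu := uniqueDiffOn_Icc hab
  set I := Icc (τ 0) (τ M) with hI
  set G := iteratedDerivWithin (d+1+1) F I with hG
  have hGc : ContinuousOn G I := hF.continuousOn_iteratedDerivWithin le_rfl hu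
  set T := taylorWithinEval F (d+1) I (τ 0) with hT
  have hTs : T ∈ splineSub d M τ := by
    obtain ⟨p, hp, hp'⟩ := taylor_poly F (d+1) I (τ 0)
    have : T = fun x => p.eval x := funext hp'
    rw [this]
    exact ⟨(p.contDiff_aeval (𝕜 := ℝ) _).contDiffOn, fun i _ => ⟨p, hp, fun _ _ => rfl⟩⟩
  have hTc := hL T hTs
  have hF' : ContDiffOn ℝ (d+1 : ℕ) (derivWithin F I) I :=
    hF.derivWithin hu (by exact_mod_cast le_rfl)
  have e1 : ∀ x ∈ I, F x = T x + ∫ u in (τ 0)..(τ M),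
      (max (x - u) 0 ^ (d+1) / (Nat.factorial (d+1) : ℝ)) * G u :=
    fun x hx => taylor_int hab (by omega) hF hx
  have e2 : ∀ x ∈ I, derivWithin F I x = derivWithin T I x + ∫ u in (τ 0)..(τ M),
      (max (x - u) 0 ^ d / (Nat.factorial d : ℝ)) * G u := by
    intro x hx
    have h1 : derivWithin T I x = taylorWithinEval (derivWithin F I) d I (τ 0) x :=
      ((hasDerivAt_taylorWithinEval_succ F d).hasDerivWithinAt).derivWithin (hu x hx)
    rw [h1, taylor_int hab (by omega) hF' hx]
    simp only [hG, iteratedDerivWithin_succ' (n := d+1)]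
    rfl
  have ii : ∀ φ : ℝ → ℝ, Continuous φ →
      IntervalIntegrable (fun u => φ u * G u) MeasureTheory.volume (τ 0) (τ M) := fun φ hφ =>
    ContinuousOn.intervalIntegrable (by
      rw [uIcc_of_le hab.le]
      exact hφ.continuousOn.mul hGc)
  have hint : ∫ u in (τ 0)..(τ M), peanoK d M τ c α β u * G u =
      (∫ u in (τ 0)..(τ M), (max (c - u) 0 ^ (d+1) / (Nat.factorial (d+1) : ℝ)) * G u) -
      ∑ i, (α i * (∫ u in (τ 0)..(τ M),
          (max (τ i - u) 0 ^ (d+1) / (Nat.factorial (d+1) : ℝ)) * G u) +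
        β i * ∫ u in (τ 0)..(τ M), (max (τ i - u) 0 ^ d / (Nat.factorial d : ℝ)) * G u) := by
    have : ∀ u, peanoK d M τ c α β u * G u =
        (max (c - u) 0 ^ (d+1) / (Nat.factorial (d+1) : ℝ)) * G u -
        ∑ i, (α i * ((max (τ i - u) 0 ^ (d+1) / (Nat.factorial (d+1) : ℝ)) * G u) +
          β i * ((max (τ i - u) 0 ^ d / (Nat.factorial d : ℝ)) * G u)) := by
      intro u
      unfold peanoK
      rw [sub_mul, Finset.sum_mul]
      congr 1
      exact Finset.sum_congr rfl fun i _ => by ring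
    simp_rw [this]
    have j1 : ∀ i : Fin (M+1), IntervalIntegrable
        (fun u => α i * ((max (τ i - u) 0 ^ (d+1) / (Nat.factorial (d+1) : ℝ)) * G u))
        MeasureTheory.volume (τ 0) (τ M) := fun i => (ii _ (by fun_prop)).const_mul _
    have j2 : ∀ i : Fin (M+1), IntervalIntegrable
        (fun u => β i * ((max (τ i - u) 0 ^ d / (Nat.factorial d : ℝ)) * G u))
        MeasureTheory.volume (τ 0) (τ M) := fun i => (ii _ (by fun_prop)).const_mul _
    rw [intervalIntegral.integral_sub (ii _ (by fun_prop)), intervalIntegral.integral_finsetSum]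
    · congr 1
      refine Finset.sum_congr rfl fun i _ => ?_
      rw [intervalIntegral.integral_add (j1 i) (j2 i), intervalIntegral.integral_const_mul,
        intervalIntegral.integral_const_mul]
    · intro i _
      exact (j1 i).add (j2 i)
    · apply ContinuousOn.intervalIntegrable
      rw [uIcc_of_le hab.le]
      refine continuousOn_finsetSum _ fun i _ => ?_
      refine ContinuousOn.add ?_ ?_
      · exact continuousOn_const.mul ((by fun_prop : Continuous fun u : ℝ =>
          max (τ i - u) 0 ^ (d+1) / (Nat.factorial (d+1) : ℝ)).continuousOn.mul hGc)
      · exact continuousOn_const.mul ((by fun_prop : Continuous fun u : ℝ =>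
          max (τ i - u) 0 ^ d / (Nat.factorial d : ℝ)).continuousOn.mul hGc)
  rw [hint, e1 c hc, hTc]
  have : ∀ i : Fin (M+1), α i * F (τ i) + β i * derivWithin F I (τ i) =
      (α i * T (τ i) + β i * derivWithin T I (τ i)) +
      (α i * (∫ u in (τ 0)..(τ M),
          (max (τ i - u) 0 ^ (d+1) / (Nat.factorial (d+1) : ℝ)) * G u) +
        β i * ∫ u in (τ 0)..(τ M), (max (τ i - u) 0 ^ d / (Nat.factorial d : ℝ)) * G u) := by
    intro i
    rw [e1 _ (hmem i), e2 _ (hmem i)]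
    ring
  rw [Finset.sum_congr rfl (fun i _ => this i), Finset.sum_add_distrib
    (f := fun i : Fin (M+1) => α i * T (τ i) + β i * derivWithin T I (τ i))]
  abel

theorem interp_val {k d M : ℕ} (hk : 2*k = M+3) (hd : d = M + 1) {τ : ℕ → ℝ} {c : ℝ}
    {α β : Fin (M+1) → ℝ} (hL : ∀ S ∈ splineSub d M τ,
      S c = ∑ i, (α i * S (τ i) + β i * derivWithin S (Icc (τ 0) (τ M)) (τ i)))
    {f H : ℝ → ℝ} (h : IsHermiteSplineInterp k τ f H) :
    H c = ∑ i : Fin (M+1), (α i * f (τ i) + β i * derivWithin f (Icc (τ 0) (τ M)) (τ i)) := by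
  obtain ⟨h1, h2, h3⟩ := h
  rw [show 2*k-3 = M by omega] at h1 h2 h3
  rw [show 2*k-2 = d by omega] at h1 h3
  rw [show 2*k-1 = d+1 by omega] at h2
  rw [hL H ⟨h1, h2⟩]
  refine Finset.sum_congr rfl fun i _ => ?_
  rw [(h3 i (by omega)).1, (h3 i (by omega)).2]


/-- the key inequality `g(c)·e_k(c) ≤ E + R` of Lemma 4.2 of the paper,
where `e_k` is the Hermite interpolation error for `x^{2k}/(2k)!`, `E` is the
interpolation error of `Y - Y₀` at `c`, and `R` is the Peano-kernel remainder
involving `g = Y₀^{(2k)}`. -/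
theorem stmt2 (k : ℕ) (hk : 2 ≤ k) (τ : ℕ → ℝ)
    (hτ : ∀ i, i < 2*k-3 → τ i < τ (i+1))
    (c : ℝ) (hc : c ∈ Icc (τ 0) (τ (2*k-3)))
    (Y₀ : ℝ → ℝ) (hY₀ : ContDiffOn ℝ (2*k : ℕ) Y₀ (Icc (τ 0) (τ (2*k-3))))
    (g : ℝ → ℝ)
    (hg : ∀ x ∈ Icc (τ 0) (τ (2*k-3)),
      g x = iteratedDerivWithin (2*k) Y₀ (Icc (τ 0) (τ (2*k-3))) x)
    (Y : ℝ → ℝ) (hY : ContDiffOn ℝ 1 Y (Icc (τ 0) (τ (2*k-3))))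
    (HY : ℝ → ℝ) (hHY : IsHermiteSplineInterp k τ Y HY)
    (hYc : HY c ≥ Y c)
    (HD : ℝ → ℝ) (hHD : IsHermiteSplineInterp k τ (fun x => Y x - Y₀ x) HD)
    (Hφ : ℝ → ℝ → ℝ)
    (hHφ : ∀ u ∈ Icc (τ 0) (τ (2*k-3)),
      IsHermiteSplineInterp k τ
        (fun t => max (t - u) 0 ^ (2*k-1) / (Nat.factorial (2*k-1) : ℝ)) (Hφ u))
    (He : ℝ → ℝ)
    (hHe : IsHermiteSplineInterp k τ
      (fun x => x ^ (2*k) / (Nat.factorial (2*k) : ℝ)) He) :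
    g c * (c ^ (2*k) / (Nat.factorial (2*k) : ℝ) - He c) ≤
      (HD c - (Y c - Y₀ c)) +
      (- ∫ u in (τ 0)..(τ (2*k-3)),
          (max (c - u) 0 ^ (2*k-1) / (Nat.factorial (2*k-1) : ℝ) - Hφ u c) *
            (g u - g c)) := by
  obtain ⟨M, hM⟩ : ∃ M, 2*k = M + 3 := ⟨2*k-3, by omega⟩
  have hM0 : 0 < M := by omega
  rw [show 2*k-3 = M by omega] at hτ hc hY₀ hg hY hHφ ⊢
  rw [show 2*k-1 = M+1+1 by omega] at hHφ ⊢
  rw [show 2*k = M+1+1+1 by omega] at hY₀ hg hHe ⊢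
  have hab : τ 0 < τ M := tau_lt hτ M 0 hM0 le_rfl
  have hu := uniqueDiffOn_Icc hab
  obtain ⟨α, β, hL⟩ := exists_functional (d := M+1) hM0 rfl hτ hc
  have hmem : ∀ i : Fin (M+1), τ i ∈ Icc (τ 0) (τ M) := fun i =>
    ⟨tau_le hτ _ _ (Nat.zero_le _) (by omega), tau_le hτ _ _ (by omega) le_rfl⟩
  have vY := interp_val hM rfl hL hHY
  have vD := interp_val hM rfl hL hHD
  have ve := interp_val hM rfl hL hHe
  have vφ : ∀ u ∈ Icc (τ 0) (τ M),
      max (c - u) 0 ^ (M+1+1) / (Nat.factorial (M+1+1) : ℝ) - Hφ u c =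
        peanoK (M+1) M τ c α β u := by
    intro u hu'
    rw [interp_val hM rfl hL (hHφ u hu')]
    unfold peanoK
    congr 1
    refine Finset.sum_congr rfl fun i _ => ?_
    rw [((phi_deriv (M+1) (by omega) u (τ i)).hasDerivWithinAt).derivWithin (hu _ (hmem i))]
  have P0 := peano hM0 rfl hτ hc hL hY₀
  have hec : ContDiff ℝ (M+1+1+1 : ℕ)
      (fun x : ℝ => x ^ (M+1+1+1) / (Nat.factorial (M+1+1+1) : ℝ)) := by fun_prop
  have Pe := peano hM0 rfl hτ hc hL hec.contDiffOn
  rw [← ve] at Pe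
  have hone : ∀ u ∈ Icc (τ 0) (τ M), iteratedDerivWithin (M+1+1+1)
      (fun x : ℝ => x ^ (M+1+1+1) / (Nat.factorial (M+1+1+1) : ℝ)) (Icc (τ 0) (τ M)) u = 1 := by
    intro u hu'
    rw [iteratedDerivWithin_eq_iteratedDeriv hu hec.contDiffAt hu', iteratedDeriv_div_const,
      iteratedDeriv_pow, Nat.descFactorial_self]
    have : (Nat.factorial (M+1+1+1) : ℝ) ≠ 0 := by positivity
    simp [this]
  have Pe' : c ^ (M+1+1+1) / (Nat.factorial (M+1+1+1) : ℝ) - He c =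
      ∫ u in (τ 0)..(τ M), peanoK (M+1) M τ c α β u := by
    rw [Pe]
    apply intervalIntegral.integral_congr
    intro u hu'
    rw [uIcc_of_le hab.le] at hu'
    simp only [hone u hu', mul_one]
  have hgc : ContinuousOn g (Icc (τ 0) (τ M)) :=
    (hY₀.continuousOn_iteratedDerivWithin le_rfl hu).congr hg
  have P0' : ∫ u in (τ 0)..(τ M), peanoK (M+1) M τ c α β u *
        iteratedDerivWithin (M+1+1+1) Y₀ (Icc (τ 0) (τ M)) u =
      ∫ u in (τ 0)..(τ M), peanoK (M+1) M τ c α β u * g u := by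
    apply intervalIntegral.integral_congr
    intro u hu'
    rw [uIcc_of_le hab.le] at hu'
    simp only [hg u hu']
  rw [P0'] at P0
  have hK := peanoK_cont (M+1) M τ c α β
  have main : ∫ u in (τ 0)..(τ M),
      (max (c - u) 0 ^ (M+1+1) / (Nat.factorial (M+1+1) : ℝ) - Hφ u c) * (g u - g c) =
      (∫ u in (τ 0)..(τ M), peanoK (M+1) M τ c α β u * g u) -
        (∫ u in (τ 0)..(τ M), peanoK (M+1) M τ c α β u) * g c := by
    rw [← intervalIntegral.integral_mul_const, ← intervalIntegral.integral_sub]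
    · apply intervalIntegral.integral_congr
      intro u hu'
      rw [uIcc_of_le hab.le] at hu'
      simp only [vφ u hu']
      ring
    · apply ContinuousOn.intervalIntegrable
      rw [uIcc_of_le hab.le]
      exact hK.continuousOn.mul hgc
    · exact (hK.mul continuous_const).intervalIntegrable _ _
  have vD' : HD c = HY c - ∑ i : Fin (M+1),
      (α i * Y₀ (τ i) + β i * derivWithin Y₀ (Icc (τ 0) (τ M)) (τ i)) := by
    rw [vD, vY, ← Finset.sum_sub_distrib]
    refine Finset.sum_congr rfl fun i _ => ?_
    rw [derivWithin_fun_sub ((hY.differentiableOn (by simp)) _ (hmem i))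
      ((hY₀.differentiableOn (by exact_mod_cast Nat.succ_ne_zero (M+1+1))) _ (hmem i))]
    ring
  rw [main, ← P0, ← Pe', vD']
  linarith
end
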